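/- arXiv:1810.06162 — 12 statements merged into one kernel-verified Lean document; each statement's English description precedes it below -/
import Mathlib

section
/- Let H be a reflexive digraph and let ≺ be a linear ordering of the vertices of H. Then ≺ is a min ordering of H if and only if for any three vertices u, v, w with u ≺ v ≺ w: (u,w) ∈ E(H) implies (u,v) ∈ E(H), and (w,u) ∈ E(H) implies (v,u) ∈ E(H). -/
/-- A digraph on vertex type `V` is given by its edge relation `E : V → V → Prop`
(loops allowed).  The min-ordering property for a strict linear order `r`:
for any edges `(u,v)` and `(u',v')` with `r u u'` and `r v' v`, `(u,v')` is also an edge. -/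
def MinOrderProp {V : Type*} (E r : V → V → Prop) : Prop :=
  ∀ u v u' v' : V, E u v → E u' v' → r u u' → r v' v → E u v'

/-- The edge relation of the pair digraph `H⁺` of a digraph with edge relation `E`:
for all vertices `u, u', v, v'`, there are edges `(u,u') → (v,v')` and `(v',v) → (u',u)`
whenever `E u v`, `E u' v'`, `¬ E u v'`, and the endpoints have distinct coordinates. -/
def pairEdge {V : Type*} (E : V → V → Prop) (p q : V × V) : Prop :=
  ∃ u u' v v' : V, u ≠ u' ∧ v ≠ v' ∧ E u v ∧ E u' v' ∧ ¬ E u v' ∧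
    ((p = (u, u') ∧ q = (v, v')) ∨ (p = (v', v) ∧ q = (u', u)))

/-- The edge relation of the implication graph `H*` of a reflexive digraph with edge
relation `E`: for any three distinct vertices `u, v, w`, there are edges
`(u,v) → (w,v)` and `(v,w) → (v,u)` iff `[E u w ∧ ¬ E u v]` or `[E w u ∧ ¬ E v u]`. -/
def implEdge {V : Type*} (E : V → V → Prop) (p q : V × V) : Prop :=
  ∃ u v w : V, u ≠ v ∧ v ≠ w ∧ u ≠ w ∧
    ((E u w ∧ ¬ E u v) ∨ (E w u ∧ ¬ E v u)) ∧
    ((p = (u, v) ∧ q = (w, v)) ∨ (p = (v, w) ∧ q = (v, u)))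

/-- A tournament on `V`: for each pair of distinct vertices exactly one of the two
directed edges is present, and there are no loops. -/
def IsTournamentRel {V : Type*} (T : V → V → Prop) : Prop :=
  (∀ u, ¬ T u u) ∧ ∀ u v : V, u ≠ v → (T u v ↔ ¬ T v u)

/-- A tournament (orientation of the complete graph) `T` is consistent with the digraph `E`
if for every vertex `(u,v)` of the implication graph and every vertex `(u',v')` reachable
from `(u,v)` by a directed walk in the implication graph, `u → v` in `T` implies
`u' → v'` in `T`. -/
def ConsistentWith {V : Type*} (E T : V → V → Prop) : Prop :=
  ∀ u v u' v' : V, u ≠ v → u' ≠ v' →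
    Relation.ReflTransGen (implEdge E) (u, v) (u', v') → T u v → T u' v'

/-- `u, v` form an invertible pair of the digraph `E`: they are distinct and `(u,v)` and
`(v,u)` lie in the same strong component of the pair digraph. -/
def InvertiblePair {V : Type*} (E : V → V → Prop) (u v : V) : Prop :=
  u ≠ v ∧ Relation.ReflTransGen (pairEdge E) (u, v) (v, u) ∧
    Relation.ReflTransGen (pairEdge E) (v, u) (u, v)

/-- The tournament obtained from `T` by reversing the direction of all edges `(x, y)` of `T`
with `u → x`, `x → y`, `y → u` in `T` (the set `E_u`). -/
def revTri {V : Type*} (T : V → V → Prop) (u : V) (x y : V) : Prop :=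
  (T x y ∧ ¬ (T u x ∧ T x y ∧ T y u)) ∨ (T y x ∧ T u y ∧ T x u)

/-- For a reflexive digraph `H` and a linear ordering `≺` of its vertices,
`≺` is a min ordering iff for any three vertices `u ≺ v ≺ w`,
`(u,w) ∈ E(H)` implies `(u,v) ∈ E(H)`, and `(w,u) ∈ E(H)` implies `(v,u) ∈ E(H)`. -/
theorem stmt_0 {V : Type*} [Fintype V] (E : V → V → Prop) (hrefl : ∀ v, E v v)
    (r : V → V → Prop) (hord : IsStrictTotalOrder V r) :
    MinOrderProp E r ↔
      ∀ u v w : V, r u v → r v w → (E u w → E u v) ∧ (E w u → E v u) := by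
  constructor
  · intro h u v w huv hvw
    exact ⟨fun e => h u w v v e (hrefl v) huv hvw, fun e => h v v w u (hrefl v) e hvw huv⟩
  · intro h u v u' v' e e' hu hv
    rcases trichotomous_of r u v' with h1 | h1 | h1
    · exact (h u v' v h1 hv).1 e
    · exact h1 ▸ hrefl u
    · exact (h v' u u' h1 hu).2 e'
end

section
/- If a digraph H has an invertible pair, then H has no min ordering. -/
/-- If a digraph `H` has an invertible pair, then `H` has no min ordering. -/
theorem stmt_2 {V : Type*} [Fintype V] (E : V → V → Prop)
    (h : ∃ u v : V, InvertiblePair E u v) :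
    ¬ ∃ r : V → V → Prop, IsStrictTotalOrder V r ∧ MinOrderProp E r := by
  rintro ⟨r, hr, hm⟩
  have tri : ∀ a b : V, a ≠ b → ¬ r b a → r a b := by
    intro a b hab hba
    rcases trichotomous_of r a b with h | h | h
    · exact h
    · exact absurd h hab
    · exact absurd h hba
  have step : ∀ p q : V × V, pairEdge E p q → r p.1 p.2 → r q.1 q.2 := by
    rintro p q ⟨u, u', v, v', hu, hv, h1, h2, h3, ⟨rfl, rfl⟩ | ⟨rfl, rfl⟩⟩ hp
    · exact tri _ _ hv fun hc => h3 (hm u v u' v' h1 h2 hp hc)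
    · exact tri _ _ hu.symm fun hc => h3 (hm u v u' v' h1 h2 hc hp)
  have walk : ∀ p q : V × V, Relation.ReflTransGen (pairEdge E) p q →
      r p.1 p.2 → r q.1 q.2 := by
    intro p q hpq hp
    induction hpq with
    | refl => exact hp
    | tail _ hbc ih => exact step _ _ hbc ih
  obtain ⟨u, v, huv, h1, h2⟩ := h
  have key : ∀ a b : V, r a b → r b a → False := fun a b x y =>
    irrefl_of r a (trans_of r x y)
  rcases trichotomous_of r u v with h | h | h
  · exact key _ _ h (walk _ _ h1 h)
  · exact huv h
  · exact key _ _ h (walk _ _ h2 h)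
end

section
/- Let H be a reflexive digraph, H* its implication graph, and H⁺ its pair digraph. For distinct vertices u,v of H, the pair u,v is an invertible pair (i.e., (u,v) and (v,u) are in the same strong component of H⁺) if and only if (u,v) and (v,u) are in the same strong component of H*. -/
theorem impl_le_pair {V : Type*} {E : V → V → Prop} (hrefl : ∀ v, E v v) {p q : V × V}
    (h : implEdge E p q) : pairEdge E p q := by
  obtain ⟨u, v, w, huv, hvw, huw, h1, h2⟩ := h
  rcases h1 with ⟨a, b⟩ | ⟨a, b⟩
  · exact ⟨u, v, w, v, huv, hvw.symm, a, hrefl v, b, h2⟩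
  · refine ⟨v, w, v, u, hvw, huv.symm, hrefl v, a, b, ?_⟩
    exact h2.symm

theorem pair_le_impl {V : Type*} {E : V → V → Prop} (hrefl : ∀ v, E v v) {p q : V × V}
    (h : pairEdge E p q) : Relation.ReflTransGen (implEdge E) p q := by
  obtain ⟨u, u', v, v', h1, h2, a, b, c, h⟩ := h
  have h3 : u ≠ v' := fun e => c (e ▸ hrefl u)
  rcases h with ⟨rfl, rfl⟩ | ⟨rfl, rfl⟩
  · have s1 : Relation.ReflTransGen (implEdge E) (u, u') (u, v') := by
      by_cases e : u' = v'
      · rw [e]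
      · exact .single ⟨v', u, u', h3.symm, h1, Ne.symm e, Or.inr ⟨b, c⟩, Or.inr ⟨rfl, rfl⟩⟩
    refine s1.trans ?_
    by_cases e : u = v
    · rw [e]
    · exact .single ⟨u, v', v, h3, h2.symm, e, Or.inl ⟨a, c⟩, Or.inl ⟨rfl, rfl⟩⟩
  · have s1 : Relation.ReflTransGen (implEdge E) (v', v) (v', u) := by
      by_cases e : u = v
      · rw [e]
      · exact .single ⟨u, v', v, h3, h2.symm, e, Or.inl ⟨a, c⟩, Or.inr ⟨rfl, rfl⟩⟩
    refine s1.trans ?_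
    by_cases e : u' = v'
    · rw [e]
    · exact .single ⟨v', u, u', h3.symm, h1, Ne.symm e, Or.inr ⟨b, c⟩, Or.inl ⟨rfl, rfl⟩⟩

/-- For a reflexive digraph `H` and distinct vertices `u, v`, the pair `u, v`
is invertible (i.e., `(u,v)` and `(v,u)` lie in the same strong component of the pair
digraph `H⁺`) iff `(u,v)` and `(v,u)` lie in the same strong component of the
implication graph `H*`. -/
theorem stmt_5 {V : Type*} [Fintype V] (E : V → V → Prop) (hrefl : ∀ v, E v v)
    (u v : V) (huv : u ≠ v) :
    (Relation.ReflTransGen (pairEdge E) (u, v) (v, u) ∧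
        Relation.ReflTransGen (pairEdge E) (v, u) (u, v)) ↔
      (Relation.ReflTransGen (implEdge E) (u, v) (v, u) ∧
        Relation.ReflTransGen (implEdge E) (v, u) (u, v)) := by
  have key : ∀ p q, Relation.ReflTransGen (pairEdge E) p q ↔
      Relation.ReflTransGen (implEdge E) p q := by
    intro p q
    constructor
    · intro h
      induction h with
      | refl => exact .refl
      | tail _ h ih => exact ih.trans (pair_le_impl hrefl h)
    · intro h
      induction h with
      | refl => exact .refl
      | tail _ h ih => exact ih.tail (impl_le_pair hrefl h)
  rw [key, key]
end

section
/- Let H be a reflexive digraph. For distinct vertices u,v of H and their pair vertices in the pair digraph H⁺ and the implication graph H*, (u',v') is reachable from (u,v) by a directed walk in H⁺ if and only if (u',v') is reachable from (u,v) by a directed walk in H*. -/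
theorem impl_stepR {V : Type*} (E : V → V → Prop) (p q r : V) (hq : p ≠ q) (hr : p ≠ r)
    (h : (E r q ∧ ¬ E r p) ∨ (E q r ∧ ¬ E p r)) :
    Relation.ReflTransGen (implEdge E) (p, q) (p, r) := by
  by_cases hqr : q = r
  · subst hqr; exact .refl
  · exact .single ⟨r, p, q, hr.symm, hq, Ne.symm hqr, h, Or.inr ⟨rfl, rfl⟩⟩

theorem impl_stepL {V : Type*} (E : V → V → Prop) (a b c : V) (hab : a ≠ b) (hbc : b ≠ c)
    (h : (E a c ∧ ¬ E a b) ∨ (E c a ∧ ¬ E b a)) :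
    Relation.ReflTransGen (implEdge E) (a, b) (c, b) := by
  by_cases hac : a = c
  · subst hac; exact .refl
  · exact .single ⟨a, b, c, hab, hbc, hac, h, Or.inl ⟨rfl, rfl⟩⟩

theorem impl_of_pair {V : Type*} (E : V → V → Prop) (hrefl : ∀ v, E v v) (p q : V × V)
    (h : pairEdge E p q) : Relation.ReflTransGen (implEdge E) p q := by
  obtain ⟨u, u', v, v', h1, h2, e1, e2, e3, ⟨rfl, rfl⟩ | ⟨rfl, rfl⟩⟩ := h
  all_goals have hne : u ≠ v' := by rintro rfl; exact e3 (hrefl _)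
  · exact (impl_stepR E u u' v' h1 hne (Or.inr ⟨e2, e3⟩)).trans
      (impl_stepL E u v' v hne h2.symm (Or.inl ⟨e1, e3⟩))
  · exact (impl_stepR E v' v u h2.symm hne.symm (Or.inl ⟨e1, e3⟩)).trans
      (impl_stepL E v' u u' hne.symm h1 (Or.inr ⟨e2, e3⟩))

theorem pair_of_impl {V : Type*} (E : V → V → Prop) (hrefl : ∀ v, E v v) (p q : V × V)
    (h : implEdge E p q) : pairEdge E p q := by
  obtain ⟨u, v, w, h1, h2, h3, ⟨e1, e2⟩ | ⟨e1, e2⟩, ⟨rfl, rfl⟩ | ⟨rfl, rfl⟩⟩ := h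
  · exact ⟨u, v, w, v, h1, h2.symm, e1, hrefl v, e2, Or.inl ⟨rfl, rfl⟩⟩
  · exact ⟨u, v, w, v, h1, h2.symm, e1, hrefl v, e2, Or.inr ⟨rfl, rfl⟩⟩
  · exact ⟨v, w, v, u, h2, h1.symm, hrefl v, e1, e2, Or.inr ⟨rfl, rfl⟩⟩
  · exact ⟨v, w, v, u, h2, h1.symm, hrefl v, e1, e2, Or.inl ⟨rfl, rfl⟩⟩

/-- For a reflexive digraph `H` and pair vertices `(u,v)` and `(u',v')`
(with distinct coordinates), `(u',v')` is reachable from `(u,v)` by a directed walk in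
the pair digraph `H⁺` iff it is reachable by a directed walk in the implication graph `H*`. -/
theorem stmt_6 {V : Type*} [Fintype V] (E : V → V → Prop) (hrefl : ∀ v, E v v)
    (u v u' v' : V) (huv : u ≠ v) (huv' : u' ≠ v') :
    Relation.ReflTransGen (pairEdge E) (u, v) (u', v') ↔
      Relation.ReflTransGen (implEdge E) (u, v) (u', v') := by
  constructor
  · intro h
    generalize (u', v') = q at h
    induction h with
    | refl => exact .refl
    | tail _ h ih => exact ih.trans (impl_of_pair E hrefl _ _ h)
  · exact fun h => Relation.ReflTransGen.mono (pair_of_impl E hrefl) _ _ h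
end

section
/- Let H be a reflexive digraph. Then H has a min ordering if and only if there exists a tournament on V(H) (an orientation of the complete graph on V(H)) that is consistent with H. -/
def LocCons {V : Type*} (E T : V → V → Prop) : Prop :=
  ∀ a b c : V, T a b → T b c → (E a c → E a b) ∧ (E c a → E b a)

def NoTri {V : Type*} (T : V → V → Prop) (u : V) : Prop :=
  ∀ x y, T u x → T x y → ¬ T y u

theorem locCons_of {V : Type*} {E T : V → V → Prop} (hT : IsTournamentRel T)
    (h : ConsistentWith E T) : LocCons E T := by
  obtain ⟨h0, h1⟩ := hT
  intro a b c hab hbc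
  have nab : a ≠ b := by rintro rfl; exact h0 _ hab
  have nbc : b ≠ c := by rintro rfl; exact h0 _ hbc
  have nac : a ≠ c := by rintro rfl; exact (h1 _ _ nab).1 hab hbc
  by_contra hcon
  have hd : (E a c ∧ ¬ E a b) ∨ (E c a ∧ ¬ E b a) := by tauto
  exact (h1 _ _ nbc).1 hbc (h a b c b nab nbc.symm
    (Relation.ReflTransGen.single ⟨a, b, c, nab, nbc, nac, hd, Or.inl ⟨rfl, rfl⟩⟩) hab)

theorem of_locCons {V : Type*} {E T : V → V → Prop} (hT : IsTournamentRel T)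
    (h : LocCons E T) : ConsistentWith E T := by
  obtain ⟨h0, h1⟩ := hT
  intro u v u' v' _ _ hr huv
  have key : ∀ p q : V × V, Relation.ReflTransGen (implEdge E) p q → T p.1 p.2 → T q.1 q.2 := by
    intro p q hr hp
    induction hr with
    | refl => exact hp
    | tail _ hs ih =>
      obtain ⟨a, b, c, nab, nbc, nac, hd, ⟨rfl, rfl⟩ | ⟨rfl, rfl⟩⟩ := hs
      · have := h a b c ih
        have := h1 c b nbc.symm
        simp only at *
        tauto
      · have := fun k => h a b c k ih
        have := h1 b a nab.symm
        simp only at *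
        tauto
  exact key _ _ hr huv

theorem revTri_tour {V : Type*} {T : V → V → Prop} (hT : IsTournamentRel T) (u : V) :
    IsTournamentRel (revTri T u) := by
  obtain ⟨h0, h1⟩ := hT
  refine ⟨fun x => ?_, fun x y hxy => ?_⟩
  · have := h0 x
    unfold revTri; tauto
  · have := h1 x y hxy
    unfold revTri; grind

theorem revTri_noTri {V : Type*} {T : V → V → Prop} (hT : IsTournamentRel T) (u : V) :
    NoTri (revTri T u) u := by
  obtain ⟨h0, h1⟩ := hT
  intro x y
  unfold revTri; grind

theorem revTri_keep {V : Type*} {T : V → V → Prop} (hT : IsTournamentRel T) (u w : V)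
    (h : NoTri T u) : NoTri (revTri T w) u := by
  obtain ⟨h0, h1⟩ := hT
  unfold NoTri at *
  intro x y
  unfold revTri; grind

theorem revTri_cons {V : Type*} {E T : V → V → Prop} (hT : IsTournamentRel T) (u : V)
    (h : LocCons E T) : LocCons E (revTri T u) := by
  obtain ⟨h0, h1⟩ := hT
  unfold LocCons at *
  intro a b c
  unfold revTri; grind

theorem exists_noTri {V : Type*} {E T : V → V → Prop} (hT : IsTournamentRel T)
    (h : LocCons E T) (S : Finset V) :
    ∃ T' : V → V → Prop, IsTournamentRel T' ∧ LocCons E T' ∧ ∀ u ∈ S, NoTri T' u := by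
  classical
  induction S using Finset.induction_on with
  | empty => exact ⟨T, hT, h, by simp⟩
  | insert a s _ ih =>
    obtain ⟨T', h1, h2, h3⟩ := ih
    refine ⟨revTri T' a, revTri_tour h1 a, revTri_cons h1 a h2, fun u hu => ?_⟩
    rcases Finset.mem_insert.1 hu with rfl | hu
    · exact revTri_noTri h1 _
    · exact revTri_keep h1 _ _ (h3 u hu)

/-- A reflexive digraph `H` has a min ordering iff there exists a tournament
on `V(H)` consistent with `H`. -/
theorem stmt_7 {V : Type*} [Fintype V] (E : V → V → Prop) (hrefl : ∀ v, E v v) :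
    (∃ r : V → V → Prop, IsStrictTotalOrder V r ∧ MinOrderProp E r) ↔
      (∃ T : V → V → Prop, IsTournamentRel T ∧ ConsistentWith E T) := by
  constructor
  · rintro ⟨r, hr, hm⟩
    have hT : IsTournamentRel r := by
      refine ⟨fun u => irrefl_of r u, fun u v huv => ⟨fun h h' => asymm_of r h h', fun h => ?_⟩⟩
      rcases trichotomous_of r u v with h1 | h1 | h1
      · exact h1
      · exact absurd h1 huv
      · exact absurd h1 h
    exact ⟨r, hT, of_locCons hT fun a b c hab hbc =>
      ⟨fun hac => hm a c b b hac (hrefl b) hab hbc, fun hca => hm b b c a (hrefl b) hca hbc hab⟩⟩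
  · rintro ⟨T, hT, hC⟩
    obtain ⟨r, hr, hl, hn⟩ := exists_noTri hT (locCons_of hT hC) Finset.univ
    obtain ⟨h0, h1⟩ := hr
    have htr : ∀ x y z, r x y → r y z → r x z := by
      intro x y z hxy hyz
      have := hn x (Finset.mem_univ x) y z hxy hyz
      grind
    refine ⟨r, ?_, ?_⟩
    · exact { irrefl := h0, trans := htr, trichotomous := fun a b hab hba => by grind }
    · intro u v u' v' huv hu'v' hu hv
      unfold LocCons at hl
      by_contra hne
      have := hrefl u
      grind
end

section
/- Let H be a reflexive digraph and let ≺ be a linear ordering of V(H). Then ≺ is a min ordering of H if and only if the tournament T defined by u → v in T iff u ≺ v is consistent with H. -/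
/-- For a reflexive digraph `H` and a linear ordering `≺` of `V(H)`,
`≺` is a min ordering of `H` iff the tournament `T` with `u → v` iff `u ≺ v`
is consistent with `H`. -/
theorem stmt_8 {V : Type*} [Fintype V] (E : V → V → Prop) (hrefl : ∀ v, E v v)
    (r : V → V → Prop) (hord : IsStrictTotalOrder V r) :
    MinOrderProp E r ↔ ConsistentWith E r := by
  have irr : ∀ a, ¬ r a a := fun a => hord.irrefl a
  have tr : ∀ a b c, r a b → r b c → r a c := fun a b c => hord.trans a b c
  have tri : ∀ a b, r a b ∨ a = b ∨ r b a := fun a b => by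
    by_contra h
    push Not at h
    exact h.2.1 (hord.trichotomous a b h.1 h.2.2)
  have ne : ∀ a b, r a b → a ≠ b := fun a b h e => irr b (e ▸ h)
  constructor
  · intro hm
    have key : ∀ u v w, ((E u w ∧ ¬ E u v) ∨ (E w u ∧ ¬ E v u)) → r u v → r v w → False := by
      rintro u v w (⟨h1, h2⟩ | ⟨h1, h2⟩) huv hvw
      · exact h2 (hm u w v v h1 (hrefl v) huv hvw)
      · exact h2 (hm v v w u (hrefl v) h1 hvw huv)
    have step : ∀ p q : V × V, implEdge E p q → r p.1 p.2 → r q.1 q.2 := by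
      rintro p q ⟨u, v, w, huv, hvw, huw, hE, ⟨rfl, rfl⟩ | ⟨rfl, rfl⟩⟩ hr
      · rcases tri w v with h | h | h
        · exact h
        · exact absurd h.symm hvw
        · exact (key u v w hE hr h).elim
      · rcases tri v u with h | h | h
        · exact h
        · exact absurd h.symm huv
        · exact (key u v w hE h hr).elim
    have walk : ∀ p q : V × V, Relation.ReflTransGen (implEdge E) p q →
        r p.1 p.2 → r q.1 q.2 := by
      intro p q h hp
      induction h with
      | refl => exact hp
      | tail _ h2 ih => exact step _ _ h2 ih
    intro u v u' v' _ _ h hr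
    exact walk _ _ h hr
  · intro hc
    have key : ∀ u v w, ((E u w ∧ ¬ E u v) ∨ (E w u ∧ ¬ E v u)) → r u v → r v w → False := by
      intro u v w hE huv hvw
      have h := hc u v w v (ne _ _ huv) (ne _ _ hvw).symm
        (Relation.ReflTransGen.single ⟨u, v, w, ne _ _ huv, ne _ _ hvw,
          ne _ _ (tr _ _ _ huv hvw), hE, Or.inl ⟨rfl, rfl⟩⟩) huv
      exact irr _ (tr _ _ _ hvw h)
    intro u v u' v' h1 h2 hu hv
    by_contra hn
    rcases tri u v' with h | h | h
    · exact key u v' v (Or.inl ⟨h1, hn⟩) h hv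
    · exact hn (h ▸ hrefl u)
    · exact key v' u u' (Or.inr ⟨h2, hn⟩) h hu
end

section
/- Let H be a reflexive digraph and let T be a tournament on V(H) consistent with H. If u, v, w are vertices with u → v, v → w, and w → u in T, then the set {u, v, w} is complete in H (i.e., (x,y) ∈ E(H) for all x,y ∈ {u,v,w} with x ≠ y) or independent in H (i.e., (x,y) ∉ E(H) for all x,y ∈ {u,v,w} with x ≠ y). -/
/-- Let `T` be a tournament consistent with a reflexive digraph `H`.
If `u → v`, `v → w`, `w → u` in `T`, then `{u, v, w}` is complete or independent in `H`. -/
theorem stmt_9 {V : Type*} [Fintype V] (E : V → V → Prop) (hrefl : ∀ v, E v v)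
    (T : V → V → Prop) (hT : IsTournamentRel T) (hcons : ConsistentWith E T)
    (u v w : V) (h1 : T u v) (h2 : T v w) (h3 : T w u) :
    (∀ x ∈ ({u, v, w} : Set V), ∀ y ∈ ({u, v, w} : Set V), x ≠ y → E x y) ∨
      (∀ x ∈ ({u, v, w} : Set V), ∀ y ∈ ({u, v, w} : Set V), x ≠ y → ¬ E x y) := by
  have key : ∀ a b c : V, T a b → T b c → T c a → (E a c → E a b) ∧ (E c a → E b a) := by
    intro a b c hab hbc hca
    have nab : a ≠ b := fun h => hT.1 b (h ▸ hab)
    have nbc : b ≠ c := fun h => hT.1 c (h ▸ hbc)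
    have nac : a ≠ c := fun h => hT.1 c (h ▸ hca)
    have hn : ¬ ((E a c ∧ ¬ E a b) ∨ (E c a ∧ ¬ E b a)) := fun h =>
      (hT.2 b c nbc).1 hbc (hcons a b c b nab nbc.symm
        (Relation.ReflTransGen.single ⟨a, b, c, nab, nbc, nac, h, Or.inl ⟨rfl, rfl⟩⟩) hab)
    tauto
  obtain ⟨a1, a2⟩ := key u v w h1 h2 h3
  obtain ⟨b1, b2⟩ := key v w u h2 h3 h1
  obtain ⟨c1, c2⟩ := key w u v h3 h1 h2
  by_cases h : E u v
  · left
    rintro x (rfl | rfl | rfl) y (rfl | rfl | rfl) hxy <;> tauto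
  · right
    rintro x (rfl | rfl | rfl) y (rfl | rfl | rfl) hxy <;> tauto
end

section
/- Let H be a reflexive digraph and let T be a tournament on V(H) consistent with H. Suppose T has three vertices u, v, w with u → v, v → w, and w → u in T. If v' → w' in T and (v',w') → (v,w) is an edge of the implication graph H*, then u → v', v' → w', and w' → u in T. -/
/-- Let `T` be a tournament consistent with a reflexive digraph `H`, and
suppose `u → v`, `v → w`, `w → u` in `T`.  If `v' → w'` in `T` and `(v',w') → (v,w)` is
an edge of the implication graph `H*`, then `u → v'`, `v' → w'`, `w' → u` in `T`. -/
theorem stmt_10 {V : Type*} [Fintype V] (E : V → V → Prop) (hrefl : ∀ v, E v v)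
    (T : V → V → Prop) (hT : IsTournamentRel T) (hcons : ConsistentWith E T)
    (u v w v' w' : V) (h1 : T u v) (h2 : T v w) (h3 : T w u)
    (h4 : T v' w') (h5 : implEdge E (v', w') (v, w)) :
    T u v' ∧ T v' w' ∧ T w' u := by
  obtain ⟨hl, ht⟩ := hT
  have hne : ∀ p q, T p q → p ≠ q := by
    rintro p q h rfl
    exact hl p h
  have has : ∀ p q, T p q → ¬ T q p := fun p q h => (ht p q (hne p q h)).1 h
  have P : ∀ p q r, T p q → T q r → p ≠ r → (E p r → E p q) ∧ (E r p → E q p) := by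
    intro p q r hpq hqr hpr
    have key : ((E p r ∧ ¬ E p q) ∨ (E r p ∧ ¬ E q p)) → False := by
      intro h
      have hrq : T r q := hcons p q r q (hne _ _ hpq) (hne _ _ hqr).symm
        (Relation.ReflTransGen.single
          ⟨p, q, r, hne _ _ hpq, hne _ _ hqr, hpr, h, Or.inl ⟨rfl, rfl⟩⟩) hpq
      exact has _ _ hqr hrq
    tauto
  have huw : u ≠ w := (hne _ _ h3).symm
  have hvu : v ≠ u := (hne _ _ h1).symm
  have hwv : w ≠ v := (hne _ _ h2).symm
  have c1 := P u v w h1 h2 huw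
  have c2 := P v w u h2 h3 hvu
  have c3 := P w u v h3 h1 hwv
  obtain ⟨a, b, c, hab, hbc, hac, hE, h | h⟩ := h5
  · simp only [Prod.mk.injEq] at h
    obtain ⟨⟨rfl, rfl⟩, rfl, rfl⟩ := h
    refine ⟨?_, h4, h3⟩
    have hn : u ≠ v' := by
      rintro rfl
      exact has _ _ h4 h3
    refine (ht _ _ hn).2 fun hvu' => ?_
    have d1 := P v' u v hvu' h1 hac
    have d2 := P v' w u h4 h3 hn.symm
    rcases hE with ⟨x, y⟩ | ⟨x, y⟩
    · exact y (d2.1 (d1.1 x))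
    · exact y (d2.2 (d1.2 x))
  · simp only [Prod.mk.injEq] at h
    obtain ⟨⟨rfl, rfl⟩, rfl, rfl⟩ := h
    refine ⟨h1, h4, ?_⟩
    have hn : w' ≠ u := by
      rintro rfl
      exact has _ _ h4 h1
    refine (ht _ _ hn).2 fun huc => ?_
    have d1 := P w u w' h3 huc hac
    rcases hE with ⟨x, y⟩ | ⟨x, y⟩
    · exact y (c2.2 (c1.1 (c3.2 (c2.1 (c1.2 (d1.1 x))))))
    · exact y (c2.1 (c1.2 (c3.1 (c2.2 (c1.1 (d1.2 x))))))
end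

section
/- Let H be a reflexive digraph, let T be a tournament on V(H) consistent with H, and let u be a vertex of H. Let E_u be the set of edges (v,w) of T such that u → v, v → w, and w → u in T, and let T' be the tournament obtained from T by reversing the direction of all edges in E_u. Then T' is consistent with H. -/
theorem aux_step {V : Type*} (E : V → V → Prop)
    (T : V → V → Prop) (hT : IsTournamentRel T)
    (hs : ∀ a b c, a ≠ b → b ≠ c → a ≠ c → ((E a c ∧ ¬ E a b) ∨ (E c a ∧ ¬ E b a)) →
      T a b → T c b) (u a b c : V) (hab : a ≠ b) (hbc : b ≠ c) (hac : a ≠ c)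
    (h1 : E a c) (h2 : ¬ E a b) (h : revTri T u a b) : revTri T u c b := by
  obtain ⟨hirr, ht⟩ := hT
  have tab := ht a b hab
  have tbc := ht b c hbc
  have tac := ht a c hac
  by_cases ua : u = a
  · subst ua
    have := hirr u
    have := hs u b c
    unfold revTri at *
    grind
  by_cases ub : u = b
  · subst ub
    have := hirr u
    have := hs a u c
    unfold revTri at *
    grind
  by_cases uc : u = c
  · subst uc
    have := hirr u
    have := hs a b u
    unfold revTri at *
    grind
  have tua := ht u a ua
  have tub := ht u b ub
  have tuc := ht u c uc
  have k1 := hs a b c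
  have k2 := hs a c b
  have k3 := hs b a c
  have k4 := hs b c a
  have k5 := hs c a b
  have k6 := hs c b a
  have l1 := hs a b u
  have l2 := hs a u b
  have l3 := hs b a u
  have l4 := hs b u a
  have l5 := hs u a b
  have l6 := hs u b a
  have m1 := hs a u c
  have m2 := hs a c u
  have m3 := hs u a c
  have m4 := hs u c a
  have m5 := hs c a u
  have m6 := hs c u a
  have n1 := hs u b c
  have n2 := hs u c b
  have n3 := hs b u c
  have n4 := hs b c u
  have n5 := hs c u b
  have n6 := hs c b u
  clear hs ht
  unfold revTri at *
  have ua' := Ne.symm ua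
  have ub' := Ne.symm ub
  have uc' := Ne.symm uc
  simp only [hab, hbc, hac, hab.symm, hbc.symm, hac.symm, ua, ub, uc, ua', ub', uc', ne_eq,
    not_false_eq_true, true_imp_iff, h1, h2] at *
  grind (splits := 40)

theorem rev_tour {V : Type*} (T : V → V → Prop) (hT : IsTournamentRel T) (u x y : V)
    (hxy : x ≠ y) : revTri T u x y ↔ ¬ revTri T u y x := by
  obtain ⟨hirr, ht⟩ := hT
  have h1 := ht x y hxy
  have h2 := ht u x
  have h3 := ht u y
  have := hirr u
  unfold revTri
  by_cases ux : u = x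
  · subst ux; grind
  by_cases uy : u = y
  · subst uy; grind
  grind

/-- Let `T` be a tournament consistent with a reflexive digraph `H`, let `u`
be a vertex, and let `T'` be obtained from `T` by reversing all edges `(v,w)` of `T` with
`u → v`, `v → w`, `w → u` in `T`.  Then `T'` is consistent with `H`. -/
theorem stmt_11 {V : Type*} [Fintype V] (E : V → V → Prop) (hrefl : ∀ v, E v v)
    (T : V → V → Prop) (hT : IsTournamentRel T) (hcons : ConsistentWith E T) (u : V) :
    ConsistentWith E (revTri T u) := by
  have hs : ∀ a b c, a ≠ b → b ≠ c → a ≠ c → ((E a c ∧ ¬ E a b) ∨ (E c a ∧ ¬ E b a)) →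
      T a b → T c b := fun a b c hab hbc hac h =>
    hcons a b c b hab hbc.symm (.single ⟨a, b, c, hab, hbc, hac, h, .inl ⟨rfl, rfl⟩⟩)
  have key : ∀ a b c, a ≠ b → b ≠ c → a ≠ c → ((E a c ∧ ¬ E a b) ∨ (E c a ∧ ¬ E b a)) →
      revTri T u a b → revTri T u c b := by
    rintro a b c hab hbc hac (⟨h1, h2⟩ | ⟨h1, h2⟩)
    · exact aux_step E T hT hs u a b c hab hbc hac h1 h2
    · exact aux_step (fun x y => E y x) T hT
        (fun a b c x y z h => hs a b c x y z h.symm) u a b c hab hbc hac h1 h2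
  have main : ∀ p q : V × V, Relation.ReflTransGen (implEdge E) p q →
      revTri T u p.1 p.2 → revTri T u q.1 q.2 := by
    intro p q h hp
    induction h with
    | refl => exact hp
    | tail _ hstep ih =>
      obtain ⟨a, b, c, hab, hbc, hac, h, ⟨rfl, rfl⟩ | ⟨rfl, rfl⟩⟩ := hstep
      · exact key a b c hab hbc hac h ih
      · have k := key a b c hab hbc hac h
        have t1 := rev_tour T hT u b a hab.symm
        have t2 := rev_tour T hT u b c hbc
        exact t1.2 (fun hab2 => t2.1 ih (k hab2))
  intro a b c d _ _ h
  exact main (a, b) (c, d) h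
end

section
/- Let H be a reflexive digraph, let T be a tournament on V(H) consistent with H, and let u be a vertex of H. Let E_u be the set of edges (v,w) of T such that u → v, v → w, and w → u in T, and let T' be the tournament obtained from T by reversing the direction of all edges in E_u. Then every directed triangle of T' (three vertices x, y, z with x → y, y → z, z → x in T') is also a directed triangle of T, and no directed triangle of T' contains the vertex u. -/
/-- Let `T` be a tournament consistent with a reflexive digraph `H`, let `u`
be a vertex, and let `T'` be obtained from `T` by reversing all edges `(v,w)` of `T` with
`u → v`, `v → w`, `w → u` in `T`.  Then every directed triangle of `T'` is a directed
triangle of `T`, and no directed triangle of `T'` contains `u`. -/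
theorem stmt_12 {V : Type*} [Fintype V] (E : V → V → Prop) (hrefl : ∀ v, E v v)
    (T : V → V → Prop) (hT : IsTournamentRel T) (hcons : ConsistentWith E T) (u : V)
    (x y z : V) (h1 : revTri T u x y) (h2 : revTri T u y z) (h3 : revTri T u z x) :
    (T x y ∧ T y z ∧ T z x) ∧ x ≠ u ∧ y ≠ u ∧ z ≠ u := by
  obtain ⟨hl, ht⟩ := hT
  have key : ∀ a, a = u ∨ (a ≠ u ∧ T u a ∧ ¬ T a u) ∨ (a ≠ u ∧ T a u ∧ ¬ T u a) := by
    intro a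
    by_cases h : a = u
    · exact Or.inl h
    · have := ht a u h
      tauto
  have hu := hl u
  unfold revTri at h1 h2 h3
  clear hcons hrefl
  rcases key x with hx | hx | hx <;> rcases key y with hy | hy | hy <;>
    rcases key z with hz | hz | hz <;> subst_vars <;> tauto
end

section
/- Let H be a reflexive digraph. There exists a tournament on V(H) consistent with H if and only if H has no invertible pairs, i.e., for no pair of distinct vertices u,v are (u,v) and (v,u) in the same strong component of the implication graph H*. -/
theorem implEdge_swap {V : Type*} (E : V → V → Prop) {p q : V × V}
    (h : implEdge E p q) : implEdge E q.swap p.swap := by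
  obtain ⟨u, v, w, h1, h2, h3, h4, h5⟩ := h
  refine ⟨u, v, w, h1, h2, h3, h4, ?_⟩
  rcases h5 with ⟨rfl, rfl⟩ | ⟨rfl, rfl⟩
  · right; simp
  · left; simp

theorem reach_swap {V : Type*} (E : V → V → Prop) {p q : V × V}
    (h : Relation.ReflTransGen (implEdge E) p q) :
    Relation.ReflTransGen (implEdge E) q.swap p.swap := by
  induction h with
  | refl => exact .refl
  | tail _ h ih => exact .head (implEdge_swap E h) ih

/-- For a reflexive digraph `H`, there exists a tournament on `V(H)`
consistent with `H` iff `H` has no invertible pairs, i.e., for no distinct `u, v` are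
`(u,v)` and `(v,u)` in the same strong component of the implication graph `H*`. -/
theorem stmt_14 {V : Type*} [Fintype V] (E : V → V → Prop) (hrefl : ∀ v, E v v) :
    (∃ T : V → V → Prop, IsTournamentRel T ∧ ConsistentWith E T) ↔
      ¬ ∃ u v : V, u ≠ v ∧
        Relation.ReflTransGen (implEdge E) (u, v) (v, u) ∧
        Relation.ReflTransGen (implEdge E) (v, u) (u, v) := by
  constructor
  · rintro ⟨T, ⟨_, hT⟩, hc⟩ ⟨u, v, huv, h1, h2⟩
    have a := hc u v v u huv huv.symm h1
    have b := hc v u u v huv.symm huv h2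
    have c := hT u v huv
    tauto
  · intro hno
    let P : Set (Set (V × V)) := {S | (∀ p ∈ S, ∀ q, Relation.ReflTransGen (implEdge E) p q → q ∈ S)
      ∧ ∀ p ∈ S, p.swap ∉ S}
    obtain ⟨S, hS⟩ := (Set.toFinite P).exists_maximal ⟨∅, by simp [P]⟩
    obtain ⟨hcl, hsw⟩ := hS.prop
    have key : ∀ p : V × V, ¬ Relation.ReflTransGen (implEdge E) p p.swap → p.swap ∉ S → p ∈ S := by
      intro p hp hpS
      have hmem : S ∪ {q | Relation.ReflTransGen (implEdge E) p q} ∈ P := by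
        refine ⟨?_, ?_⟩
        · rintro x (hx | hx) q hq
          · exact Or.inl (hcl x hx q hq)
          · exact Or.inr (Relation.ReflTransGen.trans hx hq)
        · rintro x (hx | hx) (hy | hy)
          · exact hsw x hx hy
          · have := reach_swap E hy
            rw [Prod.swap_swap] at this
            exact hpS (hcl x hx _ this)
          · exact hpS (hcl _ hy _ (reach_swap E hx))
          · have := reach_swap E hy
            rw [Prod.swap_swap] at this
            exact hp (Relation.ReflTransGen.trans hx this)
      exact hS.le_of_ge hmem Set.subset_union_left (Or.inr Relation.ReflTransGen.refl)
    refine ⟨fun x y => (x, y) ∈ S, ⟨fun u hu => hsw _ hu hu, fun u v huv => ⟨fun h => hsw _ h, ?_⟩⟩, ?_⟩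
    · intro h
      by_cases h1 : Relation.ReflTransGen (implEdge E) (u, v) (v, u)
      · by_contra h2
        have h3 : ¬ Relation.ReflTransGen (implEdge E) (v, u) (u, v) :=
          fun h3 => hno ⟨u, v, huv, h1, h3⟩
        exact h (key (v, u) h3 h2)
      · exact key (u, v) h1 h
    · intro u v u' v' _ _ hr h
      exact hcl _ h _ hr
end

section
/- Let H be a reflexive digraph and let T be a tournament on V(H) consistent with H. Suppose u, v, w are vertices with u → v, v → w, w → u in T and (u,v) ∈ E(H). Then (v,u), (v,w), (w,v), (u,w), (w,u) ∈ E(H); that is, {u,v,w} is complete in H. -/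
/-- Let `T` be a tournament consistent with a reflexive digraph `H`, with
`u → v`, `v → w`, `w → u` in `T` and `(u,v) ∈ E(H)`.  Then `{u,v,w}` is complete in `H`. -/
theorem stmt_16 {V : Type*} [Fintype V] (E : V → V → Prop) (hrefl : ∀ v, E v v)
    (T : V → V → Prop) (hT : IsTournamentRel T) (hcons : ConsistentWith E T)
    (u v w : V) (h1 : T u v) (h2 : T v w) (h3 : T w u) (huv : E u v) :
    E v u ∧ E v w ∧ E w v ∧ E u w ∧ E w u := by
  have key : ∀ a b c : V, T a b → T b c → T c a →
      (E a c → E a b) ∧ (E c a → E b a) := by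
    intro a b c hab hbc hca
    have nab : a ≠ b := fun h => hT.1 b (by rw [h] at hab; exact hab)
    have nbc : b ≠ c := fun h => hT.1 c (by rw [h] at hbc; exact hbc)
    have nac : a ≠ c := fun h => hT.1 c (by rw [h] at hca; exact hca)
    have no : ¬ ((E a c ∧ ¬ E a b) ∨ (E c a ∧ ¬ E b a)) := by
      intro h
      have hcb : T c b := hcons a b c b nab nbc.symm
        (Relation.ReflTransGen.single ⟨a, b, c, nab, nbc, nac, h, Or.inl ⟨rfl, rfl⟩⟩) hab
      exact (hT.2 b c nbc).1 hbc hcb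
    tauto
  have k1 := key u v w h1 h2 h3
  have k2 := key v w u h2 h3 h1
  have k3 := key w u v h3 h1 h2
  tauto
end
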